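/- Let ζ₅ = e^{2πi/5} and let Λ ⊆ ℂ² be the ℤ-span of the four vectors (1,1), (ζ₅, ζ₅²), (ζ₅², ζ₅⁴), (ζ₅³, ζ₅). Then Λ is a ℤ-lattice in ℂ², the ℂ-linear map σ(z,w) = (ζ₅ z, ζ₅² w) satisfies σ(Λ) = Λ and has order 5, the induced map ⋀²(σ|_Λ) on ⋀²Λ has order 5, and there exists a generator vol of ⋀⁴Λ such that the fixed submodule {x ∈ ⋀²Λ : ⋀²(σ|_Λ)(x) = x}, with the restriction of the wedge form determined by vol, has rank 2 and is isometric to the lattice H₅ with Gram matrix [[2,1],[1,−2]]. -/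

import Mathlib

set_option synthInstance.maxHeartbeats 1000000
set_option maxHeartbeats 1000000

open ExteriorAlgebra Module Matrix

noncomputable section

/-- `Λ` is a `ℤ`-lattice in `ℂ²`: it is the `ℤ`-span of an `ℝ`-basis of `ℂ²`. -/
def IsComplexTorusLattice (Λ : Submodule ℤ (ℂ × ℂ)) : Prop :=
  ∃ b : Basis (Fin 4) ℝ (ℂ × ℂ), Λ = Submodule.span ℤ (Set.range b)

/-- The image of the `n`-th exterior power under the algebra morphism induced by a linear map
lands in the `n`-th exterior power. -/
lemma map_mem_exteriorPower {R M N : Type*} [CommRing R] [AddCommGroup M] [Module R M]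
    [AddCommGroup N] [Module R N] (f : M →ₗ[R] N) (n : ℕ) {x : ExteriorAlgebra R M}
    (hx : x ∈ ⋀[R]^n M) : ExteriorAlgebra.map f x ∈ ⋀[R]^n N := by
  rw [← ExteriorAlgebra.ιMulti_span_fixedDegree] at hx ⊢
  induction hx using Submodule.span_induction with
  | mem y hy =>
      obtain ⟨m, rfl⟩ := hy
      rw [ExteriorAlgebra.map_apply_ιMulti]
      exact Submodule.subset_span ⟨f ∘ m, rfl⟩
  | zero => simp
  | add a b _ _ ha hb => rw [map_add]; exact Submodule.add_mem _ ha hb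
  | smul r a _ ha => rw [_root_.map_smul]; exact Submodule.smul_mem _ r ha

/-- The `n`-th exterior power of a linear map. -/
def extPowMap {R M N : Type*} [CommRing R] [AddCommGroup M] [Module R M]
    [AddCommGroup N] [Module R N] (n : ℕ) (f : M →ₗ[R] N) : ⋀[R]^n M →ₗ[R] ⋀[R]^n N :=
  LinearMap.restrict (ExteriorAlgebra.map f).toLinearMap
    (fun _ hx => map_mem_exteriorPower f n hx)

/-- The automorphism `σ` of `ℂ²` maps the lattice `Λ` onto itself. -/
def PreservesLattice (σ : (ℂ × ℂ) ≃ₗ[ℂ] (ℂ × ℂ)) (Λ : Submodule ℤ (ℂ × ℂ)) : Prop :=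
  Λ.map ((σ.restrictScalars ℤ : (ℂ × ℂ) ≃ₗ[ℤ] (ℂ × ℂ)) : (ℂ × ℂ) →ₗ[ℤ] (ℂ × ℂ)) = Λ

/-- The restriction `σ|_Λ` of `σ` to the lattice `Λ`, as a `ℤ`-linear automorphism. -/
def latRestrict (σ : (ℂ × ℂ) ≃ₗ[ℂ] (ℂ × ℂ)) (Λ : Submodule ℤ (ℂ × ℂ))
    (h : PreservesLattice σ Λ) : ↥Λ ≃ₗ[ℤ] ↥Λ :=
  (σ.restrictScalars ℤ).ofSubmodules Λ Λ h

/-- The induced endomorphism `⋀²(σ|_Λ)` of `⋀²Λ`. -/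
def extSq (σ : (ℂ × ℂ) ≃ₗ[ℂ] (ℂ × ℂ)) (Λ : Submodule ℤ (ℂ × ℂ))
    (h : PreservesLattice σ Λ) : Module.End ℤ (⋀[ℤ]^2 ↥Λ) :=
  extPowMap 2 (latRestrict σ Λ h).toLinearMap

/-- The invariant lattice `T = {x ∈ ⋀²Λ : ⋀²(σ|_Λ)(x) = x}`. -/
def invLat (σ : (ℂ × ℂ) ≃ₗ[ℂ] (ℂ × ℂ)) (Λ : Submodule ℤ (ℂ × ℂ))
    (h : PreservesLattice σ Λ) : Submodule ℤ (⋀[ℤ]^2 ↥Λ) :=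
  LinearMap.ker (extSq σ Λ h - LinearMap.id)

/-- `b` is the wedge form on `⋀²Λ` determined by the generator `vol` of `⋀⁴Λ`, i.e.
`x ∧ y = b(x,y) • vol`. -/
def IsWedgeForm (Λ : Submodule ℤ (ℂ × ℂ)) (vol : ⋀[ℤ]^4 ↥Λ)
    (b : ⋀[ℤ]^2 ↥Λ →ₗ[ℤ] ⋀[ℤ]^2 ↥Λ →ₗ[ℤ] ℤ) : Prop :=
  ∀ x y : ⋀[ℤ]^2 ↥Λ, (x : ExteriorAlgebra ℤ ↥Λ) * (y : ExteriorAlgebra ℤ ↥Λ)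
    = b x y • (vol : ExteriorAlgebra ℤ ↥Λ)

/-- The restriction of the form `b` to the submodule `T` admits Gram matrix `G`
in some basis; i.e. `(T, b|_T)` is isometric to the lattice with Gram matrix `G`. -/
def HasGramMatrix {M : Type*} [AddCommGroup M] [Module ℤ M] (b : M →ₗ[ℤ] M →ₗ[ℤ] ℤ)
    (T : Submodule ℤ M) {n : ℕ} (G : Matrix (Fin n) (Fin n) ℤ) : Prop :=
  ∃ v : Basis (Fin n) ℤ ↥T, ∀ i j, b (v i : M) (v j : M) = G i j

/-!
Multiplication by `u = (ζ, ζ²)` in the ring `ℂ × ℂ` is the map `σ`, and `Λ = ℤ[u]` with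
`1 + u + u² + u³ + u⁴ = 0`. A real relation between the powers `uᵏ`, `k < 4`, is a real polynomial
of degree at most `3` vanishing at the four distinct numbers `ζ`, `ζ²` and their conjugates, so `Λ`
is a lattice with `ℤ`-basis `1, u, u², u³`. Pulling back the Plücker coordinates of `⋀²Λ` along `σ`
turns the equation `⋀²σ x = x` into `x₀₁ = x₀₃ = x₂₃` and `x₀₂ = x₁₂ = x₁₃`; the Gram matrix of
the resulting basis is read off the expansion
`x ∧ y = (x₀₁y₂₃ - x₀₂y₁₃ + x₀₃y₁₂ + x₁₂y₀₃ - x₁₃y₀₂ + x₂₃y₀₁) e₀ ∧ e₁ ∧ e₂ ∧ e₃`.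
-/

section ExteriorPower

variable {R M : Type*} [CommRing R] [AddCommGroup M] [Module R M]

lemma extPowMap_eq_map {N : Type*} [AddCommGroup N] [Module R N] (n : ℕ) (f : M →ₗ[R] N) :
    extPowMap n f = exteriorPower.map n f := by
  refine exteriorPower.linearMap_ext (AlternatingMap.ext fun v => ?_)
  simp only [LinearMap.compAlternatingMap_apply, exteriorPower.map_apply_ιMulti]
  exact Subtype.ext (ExteriorAlgebra.map_apply_ιMulti f v)

lemma exteriorPower_map_pow (n : ℕ) (f : Module.End R M) (k : ℕ) :
    exteriorPower.map n (f ^ k) = (exteriorPower.map n f : Module.End R (⋀[R]^n M)) ^ k := by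
  induction k with
  | zero => exact exteriorPower.map_id
  | succ k ih => rw [pow_succ, pow_succ, ← ih]; exact exteriorPower.map_comp _ _

lemma ιMulti_eq_det_smul {n : ℕ} (e : Basis (Fin n) R M) (v : Fin n → M) :
    exteriorPower.ιMulti R n v = e.det v • exteriorPower.ιMulti R n e := by
  suffices h : exteriorPower.ιMulti R n =
      (LinearMap.toSpanSingleton R _ (exteriorPower.ιMulti R n e)).compAlternatingMap e.det from
    congrArg (fun g => g v) h
  refine Basis.ext_alternating e fun w hw => ?_
  let τ : Equiv.Perm (Fin n) := Equiv.ofBijective w (Finite.injective_iff_bijective.1 hw)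
  change exteriorPower.ιMulti R n (e ∘ τ) = e.det (e ∘ τ) • exteriorPower.ιMulti R n e
  simp only [AlternatingMap.map_perm, Basis.det_self, smul_assoc, one_smul]

lemma span_ιMulti_basis_eq_top {n : ℕ} (e : Basis (Fin n) R M) :
    Submodule.span R {exteriorPower.ιMulti R n e} = ⊤ := by
  rw [eq_top_iff, ← exteriorPower.ιMulti_span, Submodule.span_le]
  rintro _ ⟨v, rfl⟩
  exact Submodule.mem_span_singleton.2 ⟨e.det v, (ιMulti_eq_det_smul e v).symm⟩

lemma smul_ιMulti_basis_injective {n : ℕ} (e : Basis (Fin n) R M) :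
    Function.Injective fun r : R => r • ExteriorAlgebra.ιMulti R n e := by
  intro r s h
  have h' : r • exteriorPower.ιMulti R n e = s • exteriorPower.ιMulti R n e := Subtype.ext h
  simpa [exteriorPower.alternatingMapLinearEquiv_apply_ιMulti, Basis.det_self] using
    congrArg (exteriorPower.alternatingMapLinearEquiv e.det) h'

end ExteriorPower

section Bivector

variable {R M : Type*} [CommRing R] [AddCommGroup M] [Module R M]

/-- The decomposable bivector `x ∧ y` in `⋀²M`. -/
def wedge (x y : M) : ⋀[R]^2 M := exteriorPower.ιMulti R 2 ![x, y]

lemma smul_wedge (r : R) (x y : M) : r • wedge (R := R) x y = wedge (r • x) y :=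
  Subtype.ext (by simp [wedge, ExteriorAlgebra.ιMulti_apply])

lemma map_wedge {N : Type*} [AddCommGroup N] [Module R N] (f : M →ₗ[R] N) (x y : M) :
    exteriorPower.map 2 f (wedge x y) = wedge (f x) (f y) := by
  rw [wedge, exteriorPower.map_apply_ιMulti, wedge, ← FinVec.map_eq]
  rfl

lemma coe_wedge_mul_coe_wedge (a b c d : M) :
    (wedge (R := R) a b : ExteriorAlgebra R M) * wedge (R := R) c d =
      ExteriorAlgebra.ιMulti R 4 ![a, b, c, d] := by
  simp [wedge, ExteriorAlgebra.ιMulti_apply, mul_assoc]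

@[elab_as_elim]
lemma wedge_induction {p : ⋀[R]^2 M → Prop} (decomposable : ∀ a b, p (wedge a b))
    (add : ∀ x y, p x → p y → p (x + y)) (x : ⋀[R]^2 M) : p x := by
  have hx : x ∈ Submodule.span R (Set.range (exteriorPower.ιMulti R 2 (M := M))) :=
    exteriorPower.ιMulti_span R 2 M ▸ Submodule.mem_top
  induction hx using Submodule.closure_induction with
  | zero =>
    have h : wedge (R := R) (0 : M) 0 = 0 := by simpa using (smul_wedge (0 : R) (0 : M) 0).symm
    exact h ▸ decomposable 0 0
  | add x y _ _ hx hy => exact add x y hx hy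
  | smul_mem r x hx =>
    obtain ⟨v, rfl⟩ := hx
    rw [← FinVec.etaExpand_eq v]
    exact smul_wedge r (v 0) (v 1) ▸ decomposable (r • v 0) (v 1)

/-- The Plücker coordinate `xᵢⱼ` of a bivector `x` in a basis of `M`; on `a ∧ b` it is the minor
`aᵢbⱼ - aⱼbᵢ`. -/
def plucker {I : Type*} (e : Basis I R M) (i j : I) : ⋀[R]^2 M →ₗ[R] R :=
  exteriorPower.pairingDual R M 2 (wedge (e.coord i) (e.coord j))

lemma plucker_wedge {I : Type*} (e : Basis I R M) (i j : I) (x y : M) :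
    plucker e i j (wedge x y) = e.repr x i * e.repr y j - e.repr x j * e.repr y i := by
  rw [plucker, wedge, wedge, exteriorPower.pairingDual_ιMulti_ιMulti, Matrix.det_fin_two]
  simp

lemma plucker_ext {I : Type*} [LinearOrder I] (e : Basis I R M) {x y : ⋀[R]^2 M}
    (h : ∀ i j, i < j → plucker e i j x = plucker e i j y) : x = y := by
  refine (e.exteriorPower 2).ext_elem fun s => ?_
  let i := Set.powersetCard.ofFinEmbEquiv.symm s 0
  let j := Set.powersetCard.ofFinEmbEquiv.symm s 1
  have hij : i < j := (Set.powersetCard.ofFinEmbEquiv.symm s).strictMono Fin.zero_lt_one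
  have hdual : exteriorPower.ιMultiDual R 2 e s = plucker e i j := by
    rw [exteriorPower.ιMultiDual, exteriorPower.ιMulti_family, plucker, wedge]
    congr 2
  rw [exteriorPower.basis_repr_apply, exteriorPower.basis_repr_apply, hdual, h i j hij]

lemma coe_mul_coe_eq_plucker_smul (e : Basis (Fin 4) R M) (x y : ⋀[R]^2 M) :
    (x : ExteriorAlgebra R M) * y =
      (plucker e 0 1 x * plucker e 2 3 y - plucker e 0 2 x * plucker e 1 3 y
        + plucker e 0 3 x * plucker e 1 2 y + plucker e 1 2 x * plucker e 0 3 y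
        - plucker e 1 3 x * plucker e 0 2 y + plucker e 2 3 x * plucker e 0 1 y) •
      ExteriorAlgebra.ιMulti R 4 e := by
  induction x using wedge_induction with
  | add x x' hx hx' =>
    rw [Submodule.coe_add, add_mul, hx, hx', ← add_smul]
    simp only [map_add]
    ring_nf
  | decomposable a b =>
    induction y using wedge_induction with
    | add y y' hy hy' =>
      rw [Submodule.coe_add, mul_add, hy, hy', ← add_smul]
      simp only [map_add]
      ring_nf
    | decomposable c d =>
      rw [coe_wedge_mul_coe_wedge, ← exteriorPower.ιMulti_apply_coe, ιMulti_eq_det_smul e,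
        Submodule.coe_smul, exteriorPower.ιMulti_apply_coe, Basis.det_apply]
      congr 1
      rw [Matrix.det_succ_row_zero]
      simp [Matrix.det_fin_three, Fin.sum_univ_four, plucker_wedge, Basis.toMatrix_apply,
        Fin.succAbove]
      ring

end Bivector

section CyclotomicBasis

variable {R M : Type*} [CommRing R] [AddCommGroup M] [Module R M]

/-- `f` acts in the basis `e` as multiplication by `ζ₅` acts in the basis `1, ζ₅, ζ₅², ζ₅³` of
`ℤ[ζ₅]`: its matrix is the companion matrix of `1 + X + X² + X³ + X⁴`. -/
structure IsCyclotomicBasis (f : Module.End R M) (e : Basis (Fin 4) R M) : Prop where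
  map_castSucc (i : Fin 3) : f (e i.castSucc) = e i.succ
  map_last : f (e 3) = -∑ i, e i

/-- The bivectors `e₀∧e₁ + e₀∧e₃ + e₂∧e₃` and `e₀∧e₂ + e₁∧e₂ + e₁∧e₃`, the basis of the fixed
submodule of `⋀²f` for a cyclotomic basis `e` of `f`. -/
def invariantBivector (e : Basis (Fin 4) R M) : Fin 2 → ⋀[R]^2 M :=
  ![wedge (e 0) (e 1) + wedge (e 0) (e 3) + wedge (e 2) (e 3),
    wedge (e 0) (e 2) + wedge (e 1) (e 2) + wedge (e 1) (e 3)]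

lemma plucker_smul_add_smul_invariantBivector (e : Basis (Fin 4) R M) (a b : R)
    (i j : Fin 4) :
    plucker e i j (a • invariantBivector e 0 + b • invariantBivector e 1) =
      !![0, a, b, a; -a, 0, b, b; -b, -b, 0, a; -a, -b, -a, 0] i j := by
  fin_cases i <;> fin_cases j <;> simp [invariantBivector, plucker_wedge]

lemma linearIndependent_invariantBivector (e : Basis (Fin 4) R M) :
    LinearIndependent R (invariantBivector e) := by
  refine (LinearIndependent.pair_iff (x := invariantBivector e 0)
    (y := invariantBivector e 1)).2 fun a b hab => ?_
  have h := plucker_smul_add_smul_invariantBivector e a b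
  simp only [hab, map_zero] at h
  exact ⟨(h 0 1).symm, (h 0 2).symm⟩

lemma invariantBivector_mul (e : Basis (Fin 4) R M) (i j : Fin 2) :
    (invariantBivector e i : ExteriorAlgebra R M) * invariantBivector e j =
      (!![2, 1; 1, -2] : Matrix (Fin 2) (Fin 2) R) i j • ExteriorAlgebra.ιMulti R 4 e := by
  rw [coe_mul_coe_eq_plucker_smul e]
  congr 1
  fin_cases i <;> fin_cases j <;> simp [invariantBivector, plucker_wedge] <;> norm_num

namespace IsCyclotomicBasis

variable {f : Module.End R M} {e : Basis (Fin 4) R M}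

lemma repr_apply (hf : IsCyclotomicBasis f e) (x : M) :
    ⇑(e.repr (f x)) = ![0, e.repr x 0, e.repr x 1, e.repr x 2] - fun _ => e.repr x 3 := by
  have h₀ : f (e 0) = e 1 := hf.map_castSucc 0
  have h₁ : f (e 1) = e 2 := hf.map_castSucc 1
  have h₂ : f (e 2) = e 3 := hf.map_castSucc 2
  have hfx : f x = e.repr x 0 • e 1 + e.repr x 1 • e 2 + e.repr x 2 • e 3
      - e.repr x 3 • ∑ i, e i := by
    conv_lhs => rw [← e.sum_repr x]
    simp only [Fin.sum_univ_four, map_add, map_smul, h₀, h₁, h₂, hf.map_last]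
    module
  ext i
  rw [hfx]
  fin_cases i <;> simp [Fin.sum_univ_four]

lemma pow_five (hf : IsCyclotomicBasis f e) : f ^ 5 = 1 := by
  refine LinearMap.ext fun x => e.ext_elem fun i => ?_
  fin_cases i <;> simp [pow_succ, hf.repr_apply] <;> ring

lemma plucker_map (hf : IsCyclotomicBasis f e) (x : ⋀[R]^2 M) :
    plucker e 0 1 (exteriorPower.map 2 f x) = plucker e 0 3 x ∧
    plucker e 0 2 (exteriorPower.map 2 f x) = plucker e 1 3 x ∧
    plucker e 0 3 (exteriorPower.map 2 f x) = plucker e 2 3 x ∧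
    plucker e 1 2 (exteriorPower.map 2 f x) =
      plucker e 0 1 x - plucker e 0 3 x + plucker e 1 3 x ∧
    plucker e 1 3 (exteriorPower.map 2 f x) =
      plucker e 0 2 x - plucker e 0 3 x + plucker e 2 3 x ∧
    plucker e 2 3 (exteriorPower.map 2 f x) =
      plucker e 1 2 x - plucker e 1 3 x + plucker e 2 3 x := by
  induction x using wedge_induction with
  | decomposable a b =>
    simp only [map_wedge, plucker_wedge, hf.repr_apply]
    refine ⟨?_, ?_, ?_, ?_, ?_, ?_⟩ <;> simp <;> ring
  | add x y hx hy =>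
    simp only [map_add, hx, hy, true_and]
    refine ⟨?_, ?_, ?_⟩ <;> ring

lemma map_eq_self_iff (hf : IsCyclotomicBasis f e) {x : ⋀[R]^2 M} :
    exteriorPower.map 2 f x = x ↔
      (plucker e 0 3 x = plucker e 0 1 x ∧ plucker e 2 3 x = plucker e 0 1 x) ∧
        plucker e 1 2 x = plucker e 0 2 x ∧ plucker e 1 3 x = plucker e 0 2 x := by
  obtain ⟨h01, h02, h03, h12, h13, h23⟩ := hf.plucker_map x
  constructor
  · intro h
    rw [h] at h01 h02 h03 h12
    grind
  · rintro ⟨⟨p03, p23⟩, p12, p13⟩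
    exact plucker_ext e fun i j hij => match i, j, hij with
      | 0, 1, _ => h01.trans p03
      | 0, 2, _ => h02.trans p13
      | 0, 3, _ => by rw [h03, p23, p03]
      | 1, 2, _ => by rw [h12, p03, p12, p13]; ring
      | 1, 3, _ => by rw [h13, p03, p13, p23]; ring
      | 2, 3, _ => by rw [h23, p12, p13]; ring
      | 3, j, hij => absurd hij (Fin.le_last j).not_gt

lemma span_range_invariantBivector (hf : IsCyclotomicBasis f e) :
    Submodule.span R (Set.range (invariantBivector e)) =
      LinearMap.ker (exteriorPower.map 2 f - LinearMap.id) := by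
  ext x
  rw [LinearMap.mem_ker, LinearMap.sub_apply, LinearMap.id_apply, sub_eq_zero, hf.map_eq_self_iff,
    show invariantBivector e = ![invariantBivector e 0, invariantBivector e 1] from
      (FinVec.etaExpand_eq _).symm, Matrix.range_cons_cons_empty, Submodule.mem_span_pair]
  have h := plucker_smul_add_smul_invariantBivector e
  constructor
  · rintro ⟨a, b, rfl⟩
    simp [h]
  · rintro ⟨⟨p03, p23⟩, p12, p13⟩
    refine ⟨plucker e 0 1 x, plucker e 0 2 x, plucker_ext e fun i j hij => (h _ _ i j).trans ?_⟩
    match i, j, hij with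
    | 0, 1, _ => rfl
    | 0, 2, _ => rfl
    | 0, 3, _ => exact p03.symm
    | 1, 2, _ => exact p12.symm
    | 1, 3, _ => exact p13.symm
    | 2, 3, _ => exact p23.symm
    | 3, j, hij => exact absurd hij (Fin.le_last j).not_gt

/-- The basis of the fixed submodule of `⋀²f` formed by the invariant bivectors. -/
def invariantBasis (hf : IsCyclotomicBasis f e) :
    Basis (Fin 2) R (LinearMap.ker (exteriorPower.map 2 f - LinearMap.id)) :=
  (Basis.span (linearIndependent_invariantBivector e)).map
    (LinearEquiv.ofEq _ _ hf.span_range_invariantBivector)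

lemma coe_invariantBasis (hf : IsCyclotomicBasis f e) (i : Fin 2) :
    (hf.invariantBasis i : ⋀[R]^2 M) = invariantBivector e i := by
  simp [invariantBasis, Basis.span_apply]

lemma orderOf_map [Nontrivial R] (hf : IsCyclotomicBasis f e) :
    orderOf (exteriorPower.map 2 f : Module.End R (⋀[R]^2 M)) = 5 := by
  have : Fact (Nat.Prime 5) := ⟨Nat.prime_five⟩
  refine orderOf_eq_prime ?_ fun h => ?_
  · rw [← exteriorPower_map_pow, hf.pow_five]
    exact exteriorPower.map_id
  · have := hf.map_eq_self_iff.1 (LinearMap.congr_fun h (wedge (e 0) (e 1)))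
    simp [plucker_wedge] at this

end IsCyclotomicBasis

end CyclotomicBasis

section PowerBasis

lemma map_mulLeft_span_pow {R A : Type*} [CommRing R] [CommRing A] [Algebra R A] {u : A} {n : ℕ}
    (hu : ∑ k ∈ Finset.range (n + 1), u ^ k = 0) :
    (Submodule.span R (Set.range fun k : Fin n => u ^ (k : ℕ))).map (LinearMap.mulLeft R u) =
      Submodule.span R (Set.range fun k : Fin n => u ^ (k : ℕ)) := by
  set P := Submodule.span R (Set.range fun k : Fin n => u ^ (k : ℕ))
  have mem_of_lt {k : ℕ} (hk : k < n) : u ^ k ∈ P := Submodule.subset_span ⟨⟨k, hk⟩, rfl⟩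
  have sum_mem : ∑ k ∈ Finset.range n, u ^ k ∈ P :=
    Submodule.sum_mem _ fun k hk => mem_of_lt (Finset.mem_range.1 hk)
  apply le_antisymm
  · rw [Submodule.map_span_le]
    rintro _ ⟨k, rfl⟩
    rw [LinearMap.mulLeft_apply, ← pow_succ']
    rcases (Nat.succ_le_of_lt k.2).lt_or_eq with hk | hk
    · exact mem_of_lt hk
    · rw [Finset.sum_range_succ, add_comm] at hu
      rw [← Nat.succ_eq_add_one, hk, eq_neg_of_add_eq_zero_left hu]
      exact P.neg_mem sum_mem
  · rw [Submodule.span_le]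
    rintro _ ⟨⟨_ | k, hk⟩, rfl⟩
    · refine ⟨-∑ k ∈ Finset.range n, u ^ k, P.neg_mem sum_mem, ?_⟩
      rw [Finset.sum_range_succ'] at hu
      simp only [LinearMap.mulLeft_apply, mul_neg, Finset.mul_sum, ← pow_succ']
      exact (eq_neg_of_add_eq_zero_right hu).symm
    · exact ⟨u ^ k, mem_of_lt (Nat.lt_of_succ_lt hk), (pow_succ' u k).symm⟩

lemma orderOf_eq_of_forall_apply_eq_mul {R A : Type*} [CommSemiring R] [Semiring A] [Module R A]
    {σ : A ≃ₗ[R] A} {u : A} (hσ : ∀ x, σ x = u * x) : orderOf σ = orderOf u := by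
  have pow_apply (n : ℕ) (x : A) : (σ ^ n) x = u ^ n * x := by
    induction n with
    | zero => simp
    | succ n ih => rw [pow_succ', LinearEquiv.mul_apply, ih, hσ, pow_succ', mul_assoc]
  refine orderOf_eq_orderOf_iff.2 fun n => ⟨fun h => ?_, fun h => LinearEquiv.ext fun x => ?_⟩
  · simpa [h] using (pow_apply n 1).symm
  · rw [pow_apply, h, one_mul, LinearEquiv.coe_one, id]

open ComplexConjugate

lemma linearIndependent_pow_prodMk {z w : ℂ}
    (hzw : Function.Injective ![z, w, conj z, conj w]) :
    LinearIndependent ℝ fun k : Fin 4 => ((z, w) : ℂ × ℂ) ^ (k : ℕ) := by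
  refine Fintype.linearIndependent_iff.2 fun c hc => ?_
  have hz : ∑ k : Fin 4, (c k : ℂ) * z ^ (k : ℕ) = 0 := by
    simpa [Prod.fst_sum] using congrArg Prod.fst hc
  have hw : ∑ k : Fin 4, (c k : ℂ) * w ^ (k : ℕ) = 0 := by
    simpa [Prod.snd_sum] using congrArg Prod.snd hc
  have hc' : (fun k => (c k : ℂ)) = 0 := by
    refine Matrix.eq_zero_of_forall_index_sum_mul_pow_eq_zero hzw fun i => ?_
    fin_cases i
    · exact hz
    · exact hw
    · simpa using congrArg conj hz
    · simpa using congrArg conj hw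
  exact fun k => Complex.ofReal_eq_zero.1 (congrFun hc' k)

lemma isComplexTorusLattice_span_range {v : Fin 4 → ℂ × ℂ} (hv : LinearIndependent ℝ v) :
    IsComplexTorusLattice (Submodule.span ℤ (Set.range v)) := by
  refine ⟨basisOfLinearIndependentOfCardEqFinrank hv ?_, ?_⟩
  · simp [Complex.finrank_real_complex]
  · rw [coe_basisOfLinearIndependentOfCardEqFinrank]

lemma isCyclotomicBasis_of_pow {R A : Type*} [CommRing R] [CommRing A] [Algebra R A] {u : A}
    (hu : ∑ k ∈ Finset.range (4 + 1), u ^ k = 0) {P : Submodule R A} {f : Module.End R P}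
    (hf : ∀ x, (f x : A) = u * x) {e : Basis (Fin 4) R P} (he : ∀ k, (e k : A) = u ^ (k : ℕ)) :
    IsCyclotomicBasis f e where
  map_castSucc i := Subtype.ext <| by
    rw [hf, he, he, Fin.val_castSucc, Fin.val_succ, pow_succ']
  map_last := Subtype.ext <| by
    rw [Finset.sum_range_succ, add_comm, ← Fin.sum_univ_eq_sum_range] at hu
    simpa [hf, he, ← pow_succ'] using eq_neg_of_add_eq_zero_left hu

end PowerBasis

section FifthRoot

open ComplexConjugate

variable {ζ : ℂ}

lemma injective_conjugates_of_isPrimitiveRoot_five (hζ : IsPrimitiveRoot ζ 5) :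
    Function.Injective ![ζ, ζ ^ 2, conj ζ, conj (ζ ^ 2)] := by
  have conj_eq : conj ζ = ζ ^ 4 := by
    rw [← Complex.inv_eq_conj (hζ.norm'_eq_one (by norm_num))]
    exact inv_eq_of_mul_eq_one_right (by rw [← pow_succ', hζ.pow_eq_one])
  have conj_sq_eq : conj (ζ ^ 2) = ζ ^ 3 := by
    rw [map_pow, conj_eq, ← pow_mul, pow_eq_pow_mod 8 hζ.pow_eq_one]
  have eq_pow : ![ζ, ζ ^ 2, conj ζ, conj (ζ ^ 2)] = fun i => ζ ^ (![1, 2, 4, 3] i : ℕ) := by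
    ext i
    fin_cases i <;> simp [conj_eq, ← conj_sq_eq]
  rw [eq_pow]
  have exponent_lt (i : Fin 4) : (![1, 2, 4, 3] i : ℕ) < 5 := by fin_cases i <;> simp
  have exponent_injective : Function.Injective (![1, 2, 4, 3] : Fin 4 → ℕ) := by decide
  exact fun i j hij => exponent_injective (hζ.pow_inj (exponent_lt i) (exponent_lt j) hij)

lemma sum_pow_prodMk_eq_zero (hζ : IsPrimitiveRoot ζ 5) :
    ∑ k ∈ Finset.range (4 + 1), ((ζ, ζ ^ 2) : ℂ × ℂ) ^ k = 0 := by
  have hζ' : IsPrimitiveRoot (ζ ^ 2) 5 := hζ.pow_of_coprime 2 (by norm_num)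
  ext
  · simpa [Prod.fst_sum] using hζ.geom_sum_eq_zero (by norm_num)
  · simpa [Prod.snd_sum] using hζ'.geom_sum_eq_zero (by norm_num)

lemma orderOf_prodMk_pow_two (hζ : IsPrimitiveRoot ζ 5) : orderOf ((ζ, ζ ^ 2) : ℂ × ℂ) = 5 := by
  rw [Prod.orderOf_mk, ← hζ.eq_orderOf, ← (hζ.pow_of_coprime 2 (by norm_num)).eq_orderOf,
    Nat.lcm_self]

lemma range_pow_prodMk (hζ : IsPrimitiveRoot ζ 5) :
    Set.range (fun k : Fin 4 => ((ζ, ζ ^ 2) : ℂ × ℂ) ^ (k : ℕ)) =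
      {(1, 1), (ζ, ζ ^ 2), (ζ ^ 2, ζ ^ 4), (ζ ^ 3, ζ)} := by
  have h : (ζ ^ 2) ^ 3 = ζ := by rw [← pow_mul, pow_eq_pow_mod 6 hζ.pow_eq_one, pow_one]
  have h' : (ζ ^ 2) ^ 2 = ζ ^ 4 := by rw [← pow_mul]
  ext x
  simp [Fin.exists_fin_succ, h, h', eq_comm]

end FifthRoot

theorem stmt_17_general (ζ₅ : ℂ) (hζ : IsPrimitiveRoot ζ₅ 5)
    (Λ : Submodule ℤ (ℂ × ℂ))
    (hΛ : Λ = Submodule.span ℤ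
        ({((1 : ℂ), (1 : ℂ)), (ζ₅, ζ₅ ^ 2), (ζ₅ ^ 2, ζ₅ ^ 4), (ζ₅ ^ 3, ζ₅)} : Set (ℂ × ℂ)))
    (σ : (ℂ × ℂ) ≃ₗ[ℂ] (ℂ × ℂ))
    (hσ : ∀ z w : ℂ, σ (z, w) = (ζ₅ * z, ζ₅ ^ 2 * w)) :
    IsComplexTorusLattice Λ ∧
    PreservesLattice σ Λ ∧
    orderOf σ = 5 ∧
    ∀ (h : PreservesLattice σ Λ),
      orderOf (extSq σ Λ h) = 5 ∧
      ∃ vol : ⋀[ℤ]^4 ↥Λ, Submodule.span ℤ {vol} = ⊤ ∧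
        ∀ b : ⋀[ℤ]^2 ↥Λ →ₗ[ℤ] ⋀[ℤ]^2 ↥Λ →ₗ[ℤ] ℤ, IsWedgeForm Λ vol b →
          Module.finrank ℤ ↥(invLat σ Λ h) = 2 ∧
          HasGramMatrix b (invLat σ Λ h) !![2, 1; 1, -2] := by
  have hu := sum_pow_prodMk_eq_zero hζ
  have hLI := linearIndependent_pow_prodMk (injective_conjugates_of_isPrimitiveRoot_five hζ)
  have hmul (x : ℂ × ℂ) : σ x = (ζ₅, ζ₅ ^ 2) * x := hσ x.1 x.2
  rw [← range_pow_prodMk hζ] at hΛ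
  subst hΛ
  refine ⟨isComplexTorusLattice_span_range hLI, ?_,
    (orderOf_eq_of_forall_apply_eq_mul hmul).trans (orderOf_prodMk_pow_two hζ), fun h => ?_⟩
  · exact (congrArg (Submodule.map · _) (LinearMap.ext hmul)).trans (map_mulLeft_span_pow hu)
  let e := Basis.span (hLI.restrict_scalars' ℤ)
  have he : IsCyclotomicBasis (latRestrict σ _ h).toLinearMap e :=
    isCyclotomicBasis_of_pow hu (fun x => hmul x) fun k =>
      congrArg Subtype.val (Basis.span_apply _ k)
  have hext : extSq σ _ h = exteriorPower.map 2 (latRestrict σ _ h).toLinearMap :=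
    extPowMap_eq_map 2 _
  refine ⟨hext ▸ he.orderOf_map, exteriorPower.ιMulti ℤ 4 e, span_ιMulti_basis_eq_top e,
    fun b hb => ?_⟩
  rw [invLat, hext]
  refine ⟨finrank_eq_card_basis he.invariantBasis, he.invariantBasis, fun i j => ?_⟩
  rw [he.coe_invariantBasis, he.coe_invariantBasis]
  exact smul_ιMulti_basis_injective e ((hb _ _).symm.trans (invariantBivector_mul e i j))

/-- Let `ζ₅ = exp(2πi/5)` and let `Λ` be the `ℤ`-span of `(1,1)`, `(ζ₅,ζ₅²)`, `(ζ₅²,ζ₅⁴)`,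
`(ζ₅³,ζ₅)`. Then `Λ` is a lattice in `ℂ²`, the map `σ(z,w) = (ζ₅z, ζ₅²w)` preserves `Λ` and
has order 5, the induced map on `⋀²Λ` has order 5, and for a suitable generator `vol` of
`⋀⁴Λ` the invariant lattice has rank 2 and is isometric to `H₅`. -/
theorem stmt_17 (ζ₅ : ℂ) (hζ : ζ₅ = Complex.exp (2 * Real.pi * Complex.I / 5))
    (Λ : Submodule ℤ (ℂ × ℂ))
    (hΛ : Λ = Submodule.span ℤ
        ({((1 : ℂ), (1 : ℂ)), (ζ₅, ζ₅ ^ 2), (ζ₅ ^ 2, ζ₅ ^ 4), (ζ₅ ^ 3, ζ₅)} : Set (ℂ × ℂ)))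
    (σ : (ℂ × ℂ) ≃ₗ[ℂ] (ℂ × ℂ))
    (hσ : ∀ z w : ℂ, σ (z, w) = (ζ₅ * z, ζ₅ ^ 2 * w)) :
    IsComplexTorusLattice Λ ∧
    PreservesLattice σ Λ ∧
    orderOf σ = 5 ∧
    ∀ (h : PreservesLattice σ Λ),
      orderOf (extSq σ Λ h) = 5 ∧
      ∃ vol : ⋀[ℤ]^4 ↥Λ, Submodule.span ℤ {vol} = ⊤ ∧
        ∀ b : ⋀[ℤ]^2 ↥Λ →ₗ[ℤ] ⋀[ℤ]^2 ↥Λ →ₗ[ℤ] ℤ, IsWedgeForm Λ vol b →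
          Module.finrank ℤ ↥(invLat σ Λ h) = 2 ∧
          HasGramMatrix b (invLat σ Λ h) !![2, 1; 1, -2] :=
  stmt_17_general ζ₅ (hζ ▸ Complex.isPrimitiveRoot_exp 5 (by norm_num)) Λ hΛ σ hσ
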